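/- Let B½ be a real 5×4 matrix, T½ a real 1×4 row vector, S a real 1×5 row vector, A a real 5×5 matrix, L a real 5×5 matrix, and r a real number. Set B := B½(B½)ᵀ and let the scalar T := T½(T½)ᵀ be nonzero. Define U := B½·(T·I₄ − (T½)ᵀT½)·(B½)ᵀ, X := B½(T½)ᵀS + T·(A − ½r·I₅), and Y := SᵀS. If L satisfies the algebraic Riccati equation L·U·L − L·X − Xᵀ·L − Y = 0, then L·B·L − (1/T)·(L·B½·(T½)ᵀ + Sᵀ)·(T½·(B½)ᵀ·L + S) − Aᵀ·L − L·A + r·L = 0. -/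

import Mathlib

open Matrix

/-!
The left-hand side of the Riccati equation is `T` times that of the Bellman equation. The middle
factor `T • 1 - T½ᵀ T½` of `U` contributes `T • L B L` minus the outer product
`(L B½ T½ᵀ) (T½ B½ᵀ L)`; the `S`-terms of `X` and `Y` supply precisely the missing terms that
complete this outer product to `(L B½ T½ᵀ + Sᵀ) (T½ B½ᵀ L + S)`.
-/

section CommRing

variable {m n p R : Type*} [Fintype m] [CommRing R]

/-- The left-hand side of the algebraic Riccati equation in the unknown `L`, with coefficients
`U`, `X` and `Y`. -/
def riccatiResidual (U X Y L : Matrix m m R) : Matrix m m R :=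
  L * U * L - L * X - Xᵀ * L - Y

variable [Fintype n]

/-- The instantaneous price variance `T = T½ T½ᵀ` of a single asset, as a scalar. -/
def priceVariance (Th : Matrix (Fin 1) n R) : R :=
  (Th * Thᵀ) 0 0

variable [Fintype p]

/-- The coefficient `U` of the quadratic term of the Riccati equation. The scalar `c` takes the
place of the price variance, and `Th` may have several rows. -/
def riccatiQuadraticCoeff [DecidableEq n] (c : R) (Bh : Matrix m n R) (Th : Matrix p n R) :
    Matrix m m R :=
  Bh * (c • (1 : Matrix n n R) - Thᵀ * Th) * Bhᵀ

/-- The coefficient `X` of the linear terms of the Riccati equation, where `ρ` is half the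
interest rate, so that no division is needed. -/
def riccatiLinearCoeff [DecidableEq m] (c ρ : R) (Bh : Matrix m n R) (Th : Matrix p n R)
    (S : Matrix p m R) (A : Matrix m m R) : Matrix m m R :=
  Bh * Thᵀ * S + c • (A - ρ • (1 : Matrix m m R))

theorem mul_riccatiQuadraticCoeff_mul [DecidableEq n] (c : R) (Bh : Matrix m n R)
    (Th : Matrix p n R) (L : Matrix m m R) :
    L * riccatiQuadraticCoeff c Bh Th * L =
      c • (L * (Bh * Bhᵀ) * L) - L * Bh * Thᵀ * (Th * Bhᵀ * L) := by
  simp only [riccatiQuadraticCoeff, Matrix.mul_sub, Matrix.sub_mul, Matrix.mul_smul,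
    Matrix.smul_mul, Matrix.mul_one, Matrix.mul_assoc]

theorem mul_riccatiLinearCoeff [DecidableEq m] (c ρ : R) (Bh : Matrix m n R)
    (Th : Matrix p n R) (S : Matrix p m R) (A L : Matrix m m R) :
    L * riccatiLinearCoeff c ρ Bh Th S A = L * Bh * Thᵀ * S + c • (L * A - ρ • L) := by
  simp only [riccatiLinearCoeff, Matrix.mul_add, Matrix.mul_sub, Matrix.mul_smul,
    Matrix.mul_one, Matrix.mul_assoc]

theorem transpose_riccatiLinearCoeff_mul [DecidableEq m] (c ρ : R) (Bh : Matrix m n R)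
    (Th : Matrix p n R) (S : Matrix p m R) (A L : Matrix m m R) :
    (riccatiLinearCoeff c ρ Bh Th S A)ᵀ * L =
      Sᵀ * (Th * Bhᵀ * L) + c • (Aᵀ * L - ρ • L) := by
  simp only [riccatiLinearCoeff, transpose_add, transpose_sub, transpose_smul, transpose_mul,
    transpose_one, transpose_transpose, Matrix.add_mul, Matrix.sub_mul, Matrix.smul_mul,
    Matrix.one_mul, Matrix.mul_assoc]

theorem riccatiResidual_eq_smul_sub_mul [DecidableEq m] [DecidableEq n] (c ρ : R)
    (Bh : Matrix m n R) (Th : Matrix p n R) (S : Matrix p m R) (A L : Matrix m m R) :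
    riccatiResidual (riccatiQuadraticCoeff c Bh Th) (riccatiLinearCoeff c ρ Bh Th S A)
        (Sᵀ * S) L =
      c • (L * (Bh * Bhᵀ) * L - Aᵀ * L - L * A + (2 * ρ) • L) -
        (L * Bh * Thᵀ + Sᵀ) * (Th * Bhᵀ * L + S) := by
  rw [riccatiResidual, mul_riccatiQuadraticCoeff_mul, mul_riccatiLinearCoeff,
    transpose_riccatiLinearCoeff_mul, Matrix.add_mul, Matrix.mul_add, Matrix.mul_add]
  module

end CommRing

section Field

variable {m n p K : Type*} [Fintype m] [Fintype n] [Fintype p] [Field K]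

/-- The matrix of the quadratic part of the Hamilton–Jacobi–Bellman equation. The scalar `c`
takes the place of the price variance; at `c = 0` the term with `1 / c` is dropped. -/
def bellmanQuadratic (c r : K) (Bh : Matrix m n K) (Th : Matrix p n K) (S : Matrix p m K)
    (A L : Matrix m m K) : Matrix m m K :=
  L * (Bh * Bhᵀ) * L - (1 / c) • ((L * Bh * Thᵀ + Sᵀ) * (Th * Bhᵀ * L + S)) - Aᵀ * L - L * A
    + r • L

theorem smul_bellmanQuadratic {c : K} (hc : c ≠ 0) (r : K) (Bh : Matrix m n K)
    (Th : Matrix p n K) (S : Matrix p m K) (A L : Matrix m m K) :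
    c • bellmanQuadratic c r Bh Th S A L =
      c • (L * (Bh * Bhᵀ) * L - Aᵀ * L - L * A + r • L) -
        (L * Bh * Thᵀ + Sᵀ) * (Th * Bhᵀ * L + S) := by
  rw [bellmanQuadratic]
  match_scalars <;> field_simp

variable [DecidableEq m] [DecidableEq n] [NeZero (2 : K)]

theorem riccatiResidual_eq_smul_bellmanQuadratic {c : K} (hc : c ≠ 0) (r : K)
    (Bh : Matrix m n K) (Th : Matrix p n K) (S : Matrix p m K) (A L : Matrix m m K) :
    riccatiResidual (riccatiQuadraticCoeff c Bh Th) (riccatiLinearCoeff c (r / 2) Bh Th S A)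
        (Sᵀ * S) L =
      c • bellmanQuadratic c r Bh Th S A L := by
  rw [riccatiResidual_eq_smul_sub_mul, smul_bellmanQuadratic hc, mul_div_cancel₀ r two_ne_zero]

theorem riccati_implies_bellman_quadratic_vanishes_general (Bh : Matrix m n K)
    (Th : Matrix (Fin 1) n K) (S : Matrix (Fin 1) m K) (A L : Matrix m m K) (r : K)
    (hT0 : priceVariance Th ≠ 0)
    (hRiccati : riccatiResidual (riccatiQuadraticCoeff (priceVariance Th) Bh Th)
      (riccatiLinearCoeff (priceVariance Th) (r / 2) Bh Th S A) (Sᵀ * S) L = 0) :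
    bellmanQuadratic (priceVariance Th) r Bh Th S A L = 0 := by
  rw [riccatiResidual_eq_smul_bellmanQuadratic hT0] at hRiccati
  exact (smul_eq_zero_iff_right hT0).mp hRiccati

end Field

/-- Algebraic heart of Theorem 1: if `L` solves the algebraic Riccati equation
`L U L − L X − Xᵀ L − Y = 0`, with `B := B½ B½ᵀ`, scalar `T := T½ T½ᵀ ≠ 0`,
`U := B½(T·I₄ − T½ᵀT½)B½ᵀ`, `X := B½T½ᵀS + T(A − ½r I₅)` and `Y := SᵀS`, then the quadratic
part of the Hamilton–Jacobi–Bellman equation vanishes: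
`L B L − (1/T)(L B½ T½ᵀ + Sᵀ)(T½ B½ᵀ L + S) − AᵀL − LA + rL = 0`. -/
theorem riccati_implies_bellman_quadratic_vanishes
    (Bh : Matrix (Fin 5) (Fin 4) ℝ) (Th : Matrix (Fin 1) (Fin 4) ℝ)
    (S : Matrix (Fin 1) (Fin 5) ℝ) (A L : Matrix (Fin 5) (Fin 5) ℝ) (r : ℝ)
    (T : ℝ) (hT : T = (Th * Thᵀ) 0 0) (hT0 : T ≠ 0)
    (B : Matrix (Fin 5) (Fin 5) ℝ) (hB : B = Bh * Bhᵀ)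
    (U : Matrix (Fin 5) (Fin 5) ℝ)
    (hU : U = Bh * (T • (1 : Matrix (Fin 4) (Fin 4) ℝ) - Thᵀ * Th) * Bhᵀ)
    (X : Matrix (Fin 5) (Fin 5) ℝ)
    (hX : X = Bh * Thᵀ * S + T • (A - (r / 2) • (1 : Matrix (Fin 5) (Fin 5) ℝ)))
    (Y : Matrix (Fin 5) (Fin 5) ℝ) (hY : Y = Sᵀ * S)
    (hRiccati : L * U * L - L * X - Xᵀ * L - Y = 0) :
    L * B * L - (1 / T) • ((L * Bh * Thᵀ + Sᵀ) * (Th * Bhᵀ * L + S)) - Aᵀ * L - L * A + r • L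
      = 0 := by
  subst hT hB hU hX hY
  exact riccati_implies_bellman_quadratic_vanishes_general Bh Th S A L r hT0 hRiccati
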